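/- For a passive linear quantum system, the unobservable subspace equals the span of the eigenvectors of A whose eigenvalues lie on the imaginary axis: ⋂_{k=0}^{n-1} Ker(C A^k) = ⨆_{λ ∈ ℂ, Re λ = 0} Ker(A - λ I_n) (supremum of eigenspaces of A over all purely imaginary eigenvalues λ, taken as subspaces of ℂ^n). -/

import Mathlib

open Matrix

/-!
Energy balance makes `d/dt ‖x‖² = -‖C x‖²` along `ẋ = A x`. An eigenvector with imaginary eigenvalue
loses no energy, so it produces no output and spans an invariant line inside `ker C`. Conversely, on
the largest `A`-invariant subspace of `ker C` no energy is lost, so there `i A` is symmetric and `A`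
is diagonalizable with imaginary eigenvalues. By Cayley–Hamilton, the powers `A ^ k` with
`k < dim E` already cut out that subspace.
-/

section Observability

variable {R M N : Type*} [CommSemiring R] [AddCommMonoid M] [Module R M]
  [AddCommMonoid N] [Module R N]

/-- The unobservable subspace of `ẋ = A x`, `y = C x`: the states whose output vanishes identically.
All powers of `A` are used, so that the definition does not depend on a dimension. -/
def unobservableSubspace (A : Module.End R M) (C : M →ₗ[R] N) : Submodule R M :=
  ⨅ k : ℕ, LinearMap.ker (C ∘ₗ A ^ k)

variable {A : Module.End R M} {C : M →ₗ[R] N}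

lemma mem_unobservableSubspace {x : M} :
    x ∈ unobservableSubspace A C ↔ ∀ k : ℕ, C ((A ^ k) x) = 0 := by
  simp [unobservableSubspace]

lemma unobservableSubspace_le_ker : unobservableSubspace A C ≤ LinearMap.ker C :=
  fun _ hx ↦ mem_unobservableSubspace.mp hx 0

lemma unobservableSubspace_mem_invtSubmodule : unobservableSubspace A C ∈ A.invtSubmodule := by
  intro x hx
  refine mem_unobservableSubspace.mpr fun k ↦ ?_
  rw [← Module.End.mul_apply, ← pow_succ]
  exact mem_unobservableSubspace.mp hx (k + 1)

lemma le_unobservableSubspace {p : Submodule R M} (hpA : p ∈ A.invtSubmodule)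
    (hpC : p ≤ LinearMap.ker C) : p ≤ unobservableSubspace A C :=
  fun _ hx ↦ mem_unobservableSubspace.mpr fun k ↦
    hpC (Module.End.pow_apply_mem_of_forall_mem k hpA _ hx)

end Observability

theorem iInf_range_finrank_ker_eq_unobservableSubspace {R M N : Type*} [CommRing R] [Nontrivial R]
    [AddCommGroup M] [Module R M] [Module.Free R M] [Module.Finite R M]
    [AddCommMonoid N] [Module R N] (A : Module.End R M) (C : M →ₗ[R] N) :
    ⨅ k ∈ Finset.range (Module.finrank R M), LinearMap.ker (C ∘ₗ A ^ k) =
      unobservableSubspace A C := by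
  refine le_antisymm (fun x hx ↦ mem_unobservableSubspace.mpr fun k ↦ ?_)
    (le_iInf₂ fun k _ ↦ iInf_le _ k)
  simp only [Submodule.mem_iInf, Finset.mem_range, LinearMap.mem_ker, LinearMap.comp_apply] at hx
  have hdegree : (Polynomial.X ^ k %ₘ A.charpoly).degree < Module.finrank R M := by
    rw [← A.charpoly_natDegree, ← Polynomial.degree_eq_natDegree A.charpoly_monic.ne_zero]
    exact Polynomial.degree_modByMonic_lt _ A.charpoly_monic
  rw [A.pow_eq_aeval_mod_charpoly, Polynomial.aeval_endomorphism, Polynomial.sum, map_sum]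
  refine Finset.sum_eq_zero fun i hi ↦ ?_
  have hi_lt : i < Module.finrank R M :=
    Nat.cast_lt.mp ((Polynomial.le_degree_of_mem_supp i hi).trans_lt hdegree)
  rw [map_smul, hx i hi_lt, smul_zero]

section EnergyBalance

variable {𝕜 E F : Type*} [RCLike 𝕜] [NormedAddCommGroup E] [InnerProductSpace 𝕜 E]
  [NormedAddCommGroup F] [InnerProductSpace 𝕜 F]

/-- The dissipation identity `A† + A = -C† C` of a passive system `ẋ = A x`, `y = C x`, written
weakly so that `C` need not have an adjoint. -/
def HasEnergyBalance (A : Module.End 𝕜 E) (C : E →ₗ[𝕜] F) : Prop :=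
  ∀ x y, inner 𝕜 (A x) y + inner 𝕜 x (A y) = -inner 𝕜 (C x) (C y)

lemma HasEnergyBalance.eigenspace_le_ker {A : Module.End 𝕜 E} {C : E →ₗ[𝕜] F}
    (h : HasEnergyBalance A C) {μ : 𝕜} (hμ : RCLike.re μ = 0) :
    A.eigenspace μ ≤ LinearMap.ker C := by
  intro x hx
  have hAx : A x = μ • x := Module.End.mem_eigenspace_iff.mp hx
  have hbalance : (starRingEnd 𝕜 μ + μ) * inner 𝕜 x x = -inner 𝕜 (C x) (C x) := by
    rw [← h x x, hAx, inner_smul_left, inner_smul_right, add_mul]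
  rw [add_comm, RCLike.add_conj, hμ, RCLike.ofReal_zero, mul_zero, zero_mul, zero_eq_neg,
    inner_self_eq_zero] at hbalance
  exact hbalance

end EnergyBalance

section Complex

variable {E F : Type*} [NormedAddCommGroup E] [InnerProductSpace ℂ E]
  [NormedAddCommGroup F] [InnerProductSpace ℂ F]

lemma HasEnergyBalance.isSymmetric_I_smul_restrict {A : Module.End ℂ E} {C : E →ₗ[ℂ] F}
    (h : HasEnergyBalance A C) {p : Submodule ℂ E} (hpA : p ∈ A.invtSubmodule)
    (hpC : p ≤ LinearMap.ker C) : (Complex.I • A.restrict hpA).IsSymmetric := by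
  intro x y
  have hskew : inner ℂ (A.restrict hpA x) y + inner ℂ x (A.restrict hpA y) = 0 :=
    (h x y).trans (by rw [LinearMap.mem_ker.mp (hpC x.2), inner_zero_left, neg_zero])
  simp only [LinearMap.smul_apply, inner_smul_left, inner_smul_right, Complex.conj_I]
  linear_combination -Complex.I * hskew

lemma iSup_eigenspace_re_eq_zero_eq_top [FiniteDimensional ℂ E] {T : Module.End ℂ E}
    (hT : (Complex.I • T).IsSymmetric) : ⨆ (μ : ℂ) (_ : μ.re = 0), T.eigenspace μ = ⊤ := by
  let b := hT.eigenvectorBasis rfl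
  rw [eq_top_iff, ← b.toBasis.span_eq, b.coe_toBasis, Submodule.span_le, Set.range_subset_iff]
  intro i
  refine Submodule.mem_iSup_of_mem (-Complex.I * hT.eigenvalues rfl i)
    (Submodule.mem_iSup_of_mem (by simp) (Module.End.mem_eigenspace_iff.mpr ?_))
  have hb : Complex.I • T (b i) = (hT.eigenvalues rfl i : ℂ) • b i :=
    hT.apply_eigenvectorBasis rfl i
  rw [mul_smul, ← hb, smul_smul, neg_mul, Complex.I_mul_I, neg_neg, one_smul]

lemma HasEnergyBalance.le_iSup_eigenspace [FiniteDimensional ℂ E] {A : Module.End ℂ E}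
    {C : E →ₗ[ℂ] F} (h : HasEnergyBalance A C) {p : Submodule ℂ E} (hpA : p ∈ A.invtSubmodule)
    (hpC : p ≤ LinearMap.ker C) : p ≤ ⨆ (μ : ℂ) (_ : μ.re = 0), A.eigenspace μ :=
  calc
    p = (⨆ (μ : ℂ) (_ : μ.re = 0), Module.End.eigenspace (A.restrict hpA) μ).map p.subtype := by
      rw [iSup_eigenspace_re_eq_zero_eq_top (h.isSymmetric_I_smul_restrict hpA hpC),
        Submodule.map_subtype_top]
    _ = ⨆ (μ : ℂ) (_ : μ.re = 0), (Module.End.eigenspace (A.restrict hpA) μ).map p.subtype := by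
      simp only [Submodule.map_iSup]
    _ ≤ ⨆ (μ : ℂ) (_ : μ.re = 0), A.eigenspace μ :=
      iSup₂_mono fun μ _ ↦ Module.End.eigenspace_restrict_le_eigenspace A hpA μ

theorem passive_unobservable_eq_imaginary_eigenspaces_general [FiniteDimensional ℂ E]
    {A : Module.End ℂ E} {C : E →ₗ[ℂ] F} (h : HasEnergyBalance A C) :
    ⨅ k ∈ Finset.range (Module.finrank ℂ E), LinearMap.ker (C ∘ₗ A ^ k) =
      ⨆ (μ : ℂ) (_ : μ.re = 0), A.eigenspace μ := by
  rw [iInf_range_finrank_ker_eq_unobservableSubspace]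
  exact le_antisymm
    (h.le_iSup_eigenspace unobservableSubspace_mem_invtSubmodule unobservableSubspace_le_ker)
    (iSup₂_le fun μ hμ ↦
      le_unobservableSubspace (A.eigenspace_mem_invtSubmodule μ) (h.eigenspace_le_ker hμ))

end Complex

section Matrix

variable {m n : Type*}

lemma add_conjTranspose_eq_neg_of_isHermitian [Fintype m] {Ω A : Matrix n n ℂ}
    {C : Matrix m n ℂ} (hΩ : Ω.IsHermitian)
    (hA : A = (-Complex.I) • Ω - (1 / 2 : ℂ) • (Cᴴ * C)) :
    A + Aᴴ = -(Cᴴ * C) := by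
  have hAH : Aᴴ = Complex.I • Ω - (1 / 2 : ℂ) • (Cᴴ * C) := by
    simp [hA, hΩ.eq]
  rw [hAH, hA]
  module

variable {𝕜 : Type*} [RCLike 𝕜] [Fintype n] [DecidableEq n]

lemma hasEnergyBalance_toEuclideanLin [Fintype m] {A : Matrix n n 𝕜}
    {C : Matrix m n 𝕜} (h : A + Aᴴ = -(Cᴴ * C)) :
    HasEnergyBalance (toEuclideanLin A) (toEuclideanLin C) := by
  classical
  intro x y
  calc
    inner 𝕜 (toEuclideanLin A x) y + inner 𝕜 x (toEuclideanLin A y) =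
        inner 𝕜 x (toEuclideanLin (A + Aᴴ) y) := by
      rw [map_add, toEuclideanLin_conjTranspose_eq_adjoint, LinearMap.add_apply, inner_add_right,
        LinearMap.adjoint_inner_right, add_comm]
    _ = -inner 𝕜 (toEuclideanLin C x) (toEuclideanLin C y) := by
      rw [h, map_neg, toLpLin_mul_same, toEuclideanLin_conjTranspose_eq_adjoint,
        LinearMap.neg_apply, inner_neg_right, LinearMap.comp_apply, LinearMap.adjoint_inner_right]

lemma eigenspace_toEuclideanLin (A : Matrix n n 𝕜) (μ : 𝕜) :
    Module.End.eigenspace (toEuclideanLin A) μ = LinearMap.ker (toEuclideanLin (A - μ • 1)) := by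
  rw [Module.End.eigenspace_def, map_sub, map_smul, toLpLin_one, Module.End.one_eq_id]

lemma orderIsoMapComap_ker_toEuclideanLin (M : Matrix m n 𝕜) :
    Submodule.orderIsoMapComap (WithLp.linearEquiv 2 𝕜 (n → 𝕜)) (LinearMap.ker (toEuclideanLin M)) =
      LinearMap.ker M.mulVecLin := by
  ext x
  simp [Submodule.orderIsoMapComap, Submodule.mem_map_equiv]

end Matrix

/-- **Theorem 2 (characterization of the DFS).** For a passive linear quantum system with
`A = -iΩ - (1/2)CᴴC` (`Ω` Hermitian), the unobservable subspace `⋂_{k<n} Ker(C Aᵏ)`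
equals the span of the eigenspaces of `A` for purely imaginary eigenvalues:
`⨆_{λ : ℂ, Re λ = 0} Ker(A - λ I)`. -/
theorem passive_unobservable_eq_imaginary_eigenspaces
    (n m : ℕ) (hn : 0 < n) (hm : 0 < m)
    (Ω : Matrix (Fin n) (Fin n) ℂ) (hΩ : Ω.IsHermitian)
    (C : Matrix (Fin m) (Fin n) ℂ)
    (A : Matrix (Fin n) (Fin n) ℂ)
    (hA : A = (-Complex.I) • Ω - (1 / 2 : ℂ) • (Cᴴ * C))
    (B : Matrix (Fin n) (Fin m) ℂ) (hB : B = -Cᴴ) :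
    (⨅ k ∈ Finset.range n, LinearMap.ker ((C * A ^ k).mulVecLin)) =
      ⨆ (μ : ℂ) (_ : μ.re = 0),
        LinearMap.ker ((A - μ • (1 : Matrix (Fin n) (Fin n) ℂ)).mulVecLin) := by
  have h_euclidean := passive_unobservable_eq_imaginary_eigenspaces_general
    (hasEnergyBalance_toEuclideanLin (add_conjTranspose_eq_neg_of_isHermitian hΩ hA))
  simpa only [finrank_euclideanSpace_fin, ← toLpLin_pow, ← toLpLin_mul_same,
    eigenspace_toEuclideanLin, OrderIso.map_iInf, OrderIso.map_iSup,
    orderIsoMapComap_ker_toEuclideanLin]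
    using congrArg (Submodule.orderIsoMapComap (WithLp.linearEquiv 2 ℂ (Fin n → ℂ)))
      h_euclidean
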